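/- Let μ ⪯ ν be probability measures on ℝ in convex order and let Γ ⊆ ℝ² be a maximising monotonicity set for the pair of cost functions c(x,y) := |x+y| and c'(x,y) := |x+y|y². Let y⁻ < y < y⁺ be reals (with y⁻, y, y⁺ ∈ supp(ν)) and λ ∈ [0,1] with y = (1−λ)y⁻ + λy⁺, and define f(t) := (1−λ)|t+y⁻| + λ|t+y⁺| − |t+y| and g(t) := (1−λ)|t+y⁻|(y⁻)² + λ|t+y⁺|(y⁺)² − |t+y|y². Then: (i) there do not exist x, x' ∈ ℝ with (x,y⁻), (x,y⁺), (x',y) ∈ Γ and f(x) < f(x'); (ii) there do not exist x, x' ∈ ℝ with (x,y⁻), (x,y⁺), (x',y) ∈ Γ, f(x) = f(x') and g(x) > g(x'). -/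

import Mathlib

open MeasureTheory

noncomputable section

/-- `μ` and `ν` are in convex order. -/
def InConvexOrder (μ ν : Measure ℝ) : Prop :=
  ∀ φ : ℝ → ℝ, ConvexOn ℝ Set.univ φ → Integrable φ μ → Integrable φ ν →
    ∫ x, φ x ∂μ ≤ ∫ x, φ x ∂ν

/-- `α` has finite support contained in `Γ`. -/
def HasFiniteSupportIn (α : Measure (ℝ × ℝ)) (Γ : Set (ℝ × ℝ)) : Prop :=
  ∃ S : Finset (ℝ × ℝ), ↑S ⊆ Γ ∧ α ((↑S : Set (ℝ × ℝ))ᶜ) = 0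

/-- `α'` is a competitor of `α`: a finitely supported measure with the same
marginals whose fiberwise barycenters agree with those of `α`. -/
def IsCompetitor (α α' : Measure (ℝ × ℝ)) : Prop :=
  (∃ S : Finset (ℝ × ℝ), α' ((↑S : Set (ℝ × ℝ))ᶜ) = 0) ∧
  α'.map Prod.fst = α.map Prod.fst ∧
  α'.map Prod.snd = α.map Prod.snd ∧
  ∀ x : ℝ, ∫ p in {p : ℝ × ℝ | p.1 = x}, p.2 ∂α' =
    ∫ p in {p : ℝ × ℝ | p.1 = x}, p.2 ∂α

/-- `Γ` is a minimising monotonicity set for `(c, c')`: for every finitely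
supported measure `α` with support in `Γ` and every competitor `α'` of `α`,
`∫ c dα ≤ ∫ c dα'`, and `∫ c dα = ∫ c dα'` implies `∫ c' dα ≥ ∫ c' dα'`. -/
def IsMinMonotonicitySet (c c' : ℝ → ℝ → ℝ) (Γ : Set (ℝ × ℝ)) : Prop :=
  ∀ α : Measure (ℝ × ℝ), IsFiniteMeasure α → HasFiniteSupportIn α Γ →
    ∀ α' : Measure (ℝ × ℝ), IsCompetitor α α' →
      (∫ p : ℝ × ℝ, c p.1 p.2 ∂α ≤ ∫ p : ℝ × ℝ, c p.1 p.2 ∂α') ∧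
      (∫ p : ℝ × ℝ, c p.1 p.2 ∂α = ∫ p : ℝ × ℝ, c p.1 p.2 ∂α' →
        ∫ p : ℝ × ℝ, c' p.1 p.2 ∂α' ≤ ∫ p : ℝ × ℝ, c' p.1 p.2 ∂α)

/-- `Γ` is a maximising monotonicity set for `(c, c')`: for every finitely
supported measure `α` with support in `Γ` and every competitor `α'` of `α`,
`∫ c dα ≥ ∫ c dα'`, and `∫ c dα = ∫ c dα'` implies `∫ c' dα ≤ ∫ c' dα'`. -/
def IsMaxMonotonicitySet (c c' : ℝ → ℝ → ℝ) (Γ : Set (ℝ × ℝ)) : Prop :=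
  ∀ α : Measure (ℝ × ℝ), IsFiniteMeasure α → HasFiniteSupportIn α Γ →
    ∀ α' : Measure (ℝ × ℝ), IsCompetitor α α' →
      (∫ p : ℝ × ℝ, c p.1 p.2 ∂α' ≤ ∫ p : ℝ × ℝ, c p.1 p.2 ∂α) ∧
      (∫ p : ℝ × ℝ, c p.1 p.2 ∂α = ∫ p : ℝ × ℝ, c p.1 p.2 ∂α' →
        ∫ p : ℝ × ℝ, c' p.1 p.2 ∂α ≤ ∫ p : ℝ × ℝ, c' p.1 p.2 ∂α')

/-- Three-atom measure. -/
def threeAtoms (a b : ℝ) (p q r : ℝ × ℝ) : Measure (ℝ × ℝ) :=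
  ENNReal.ofReal a • Measure.dirac p + ENNReal.ofReal b • Measure.dirac q + Measure.dirac r

theorem integral_threeAtoms {a b : ℝ} (ha : 0 ≤ a) (hb : 0 ≤ b) (p q r : ℝ × ℝ)
    (h : ℝ × ℝ → ℝ) : ∫ z, h z ∂(threeAtoms a b p q r) = a * h p + b * h q + h r := by
  have hi : ∀ z, Integrable h (Measure.dirac z) := fun z => integrable_dirac (by simp)
  have hp := (hi p).smul_measure (c := ENNReal.ofReal a) ENNReal.ofReal_ne_top
  have hq := (hi q).smul_measure (c := ENNReal.ofReal b) ENNReal.ofReal_ne_top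
  unfold threeAtoms
  rw [integral_add_measure (hp.add_measure hq) (hi r), integral_add_measure hp hq,
    integral_smul_measure, integral_smul_measure]
  simp [ha, hb]

theorem threeAtoms_supp (a b : ℝ) (p q r : ℝ × ℝ) :
    threeAtoms a b p q r ((({p, q, r} : Finset (ℝ × ℝ)) : Set (ℝ × ℝ))ᶜ) = 0 := by
  simp [threeAtoms]

theorem threeAtoms_finite (a b : ℝ) (p q r : ℝ × ℝ) :
    IsFiniteMeasure (threeAtoms a b p q r) := by
  constructor
  simp [threeAtoms, ENNReal.add_lt_top]

theorem threeAtoms_map (a b : ℝ) (p q r : ℝ × ℝ) (h : ℝ × ℝ → ℝ) (hm : Measurable h) :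
    (threeAtoms a b p q r).map h = ENNReal.ofReal a • Measure.dirac (h p) +
      ENNReal.ofReal b • Measure.dirac (h q) + Measure.dirac (h r) := by
  simp [threeAtoms, Measure.map_add _ _ hm, Measure.map_smul, Measure.map_dirac' hm]

theorem threeAtoms_competitor {l : ℝ} (h0 : 0 ≤ l) (h1 : l ≤ 1) (x x' ym y yp : ℝ)
    (hy : y = (1 - l) * ym + l * yp) :
    IsCompetitor (threeAtoms (1 - l) l (x, ym) (x, yp) (x', y))
      (threeAtoms (1 - l) l (x', ym) (x', yp) (x, y)) := by
  refine ⟨⟨_, threeAtoms_supp _ _ _ _ _⟩, ?_, ?_, ?_⟩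
  · rw [threeAtoms_map _ _ _ _ _ _ measurable_fst, threeAtoms_map _ _ _ _ _ _ measurable_fst]
    have h : ENNReal.ofReal (1 - l) + ENNReal.ofReal l = 1 := by
      rw [← ENNReal.ofReal_add (by linarith) h0]; simp
    simp only [← add_smul, h, one_smul]
    exact add_comm _ _
  · rw [threeAtoms_map _ _ _ _ _ _ measurable_snd, threeAtoms_map _ _ _ _ _ _ measurable_snd]
  · intro t
    have hms : MeasurableSet {p : ℝ × ℝ | p.1 = t} := measurable_fst (measurableSet_singleton t)
    rw [← integral_indicator hms, ← integral_indicator hms,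
      integral_threeAtoms (by linarith) h0, integral_threeAtoms (by linarith) h0]
    simp only [Set.indicator_apply, Set.mem_setOf_eq]
    split_ifs <;> linarith

/-- Lemma (maximising case): forbidden configurations on the monotonicity set of
a maximising (and secondarily minimising) martingale transport for the cost
`c(x,y) = |x+y|` with secondary cost `c'(x,y) = |x+y|·y²`, where
`y⁻ < y < y⁺` lie in the support of `ν`. -/
theorem max_variational_configurations
    (μ ν : Measure ℝ) [IsProbabilityMeasure μ] [IsProbabilityMeasure ν]
    (hconv : InConvexOrder μ ν)
    (Γ : Set (ℝ × ℝ))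
    (hΓ : IsMaxMonotonicitySet (fun x y => |x + y|) (fun x y => |x + y| * y ^ 2) Γ)
    (ym y yp : ℝ) (hy1 : ym < y) (hy2 : y < yp)
    (hsm : ∀ ε : ℝ, 0 < ε → 0 < ν (Set.Ioo (ym - ε) (ym + ε)))
    (hs : ∀ ε : ℝ, 0 < ε → 0 < ν (Set.Ioo (y - ε) (y + ε)))
    (hsp : ∀ ε : ℝ, 0 < ε → 0 < ν (Set.Ioo (yp - ε) (yp + ε)))
    (lam : ℝ) (hlam : lam ∈ Set.Icc (0 : ℝ) 1)
    (hconvcomb : y = (1 - lam) * ym + lam * yp)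
    (f g : ℝ → ℝ)
    (hf : f = fun t => (1 - lam) * |t + ym| + lam * |t + yp| - |t + y|)
    (hg : g = fun t =>
      (1 - lam) * |t + ym| * ym ^ 2 + lam * |t + yp| * yp ^ 2 - |t + y| * y ^ 2) :
    (¬ ∃ x x' : ℝ, (x, ym) ∈ Γ ∧ (x, yp) ∈ Γ ∧ (x', y) ∈ Γ ∧ f x < f x') ∧
    (¬ ∃ x x' : ℝ, (x, ym) ∈ Γ ∧ (x, yp) ∈ Γ ∧ (x', y) ∈ Γ ∧
      f x = f x' ∧ g x' < g x) := by
  obtain ⟨h0, h1⟩ := hlam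
  have key : ∀ x x' : ℝ, (x, ym) ∈ Γ → (x, yp) ∈ Γ → (x', y) ∈ Γ →
      f x' ≤ f x ∧ (f x = f x' → g x ≤ g x') := by
    intro x x' hm hp hy
    have H := hΓ (threeAtoms (1 - lam) lam (x, ym) (x, yp) (x', y)) (threeAtoms_finite _ _ _ _ _)
      ⟨_, by
        intro z hz
        simp only [Finset.coe_insert, Finset.coe_singleton, Set.mem_insert_iff,
          Set.mem_singleton_iff] at hz
        rcases hz with rfl | rfl | rfl <;> assumption, threeAtoms_supp _ _ _ _ _⟩ _
      (threeAtoms_competitor h0 h1 x x' ym y yp hconvcomb)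
    simp only [integral_threeAtoms (sub_nonneg.2 h1) h0] at H
    obtain ⟨H1, H2⟩ := H
    subst hf hg
    dsimp only
    refine ⟨by linarith, fun h => ?_⟩
    have := H2 (by linarith)
    linarith
  constructor
  · rintro ⟨x, x', hm, hp, hy, h⟩
    linarith [(key x x' hm hp hy).1]
  · rintro ⟨x, x', hm, hp, hy, h, h'⟩
    linarith [(key x x' hm hp hy).2 h]
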